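/- The limit as n → ∞ of E[X_n]/n equals 1/(e-1), where E[X_n] = d_{n+1}/(n! - d_n) is the expected value of the largest fixed point of a uniformly random permutation of [n] conditioned on having at least one fixed point. Equivalently, lim_{n→∞} d_{n+1} / (n·(n! - d_n)) = 1/(e-1). -/

import Mathlib

open Classical

noncomputable section

/-- `π` has at least one fixed point. -/
def hasFP {n : ℕ} (π : Equiv.Perm (Fin n)) : Prop := ∃ i, π i = i

/-- The set of (1-based) values of the fixed points of `π`, viewing a permutation of
`Fin n` as a permutation of `[n] = {1, …, n}` via `i ↦ i + 1`. -/
def fixVals {n : ℕ} (π : Equiv.Perm (Fin n)) : Set ℕ :=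
  {k | ∃ i : Fin n, π i = i ∧ (i : ℕ) + 1 = k}

/-- The largest fixed point `ℓ(π)` (in 1-based indexing). -/
def lfp {n : ℕ} (π : Equiv.Perm (Fin n)) : ℕ := sSup (fixVals π)

/-- The smallest fixed point `s(π)` (in 1-based indexing). -/
def sfp {n : ℕ} (π : Equiv.Perm (Fin n)) : ℕ := sInf (fixVals π)

/-- `d n` is the number of derangements of `[n]`. -/
def d (n : ℕ) : ℕ := Set.ncard {π : Equiv.Perm (Fin n) | ∀ i, π i ≠ i}

/-- `a n k` is the number of permutations of `[n]` with at least one fixed point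
whose largest fixed point equals `k`. -/
def a (n k : ℕ) : ℕ := Set.ncard {π : Equiv.Perm (Fin n) | hasFP π ∧ lfp π = k}

/-- `b n k` is the number of permutations of `[n]` with at least one fixed point
whose smallest fixed point equals `k`. -/
def b (n k : ℕ) : ℕ := Set.ncard {π : Equiv.Perm (Fin n) | hasFP π ∧ sfp π = k}

/-- `alpha n` is the sum of the largest fixed points over all non-derangements of `[n]`. -/
def alpha (n : ℕ) : ℕ :=
  ∑ π ∈ Finset.univ.filter (fun π : Equiv.Perm (Fin n) => hasFP π), lfp π

/-- `beta n` is the sum of the smallest fixed points over all non-derangements of `[n]`. -/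
def beta (n : ℕ) : ℕ :=
  ∑ π ∈ Finset.univ.filter (fun π : Equiv.Perm (Fin n) => hasFP π), sfp π

theorem d_eq_num (n : ℕ) : d n = numDerangements n := by
  have h1 := card_derangements_eq_numDerangements (Fin n)
  rw [Fintype.card_fin, ← Nat.card_eq_fintype_card] at h1
  exact h1

theorem stmt18 :
    Filter.Tendsto
      (fun n : ℕ => (d (n + 1) : ℝ) / (n * ((n.factorial : ℝ) - d n)))
      Filter.atTop (nhds (1 / (Real.exp 1 - 1))) := by
  have h0 : Filter.Tendsto (fun n : ℕ => (numDerangements n : ℝ) / n.factorial)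
      Filter.atTop (nhds (Real.exp (-1))) := numDerangements_tendsto_inv_e
  have h1 := (Filter.tendsto_add_atTop_iff_nat 1).2 h0
  have h2 : Filter.Tendsto (fun n : ℕ => 1 + (1 : ℝ) / n) Filter.atTop (nhds (1 + 0)) :=
    tendsto_const_nhds.add tendsto_one_div_atTop_nhds_zero_nat
  have he : Real.exp (-1) < 1 := by
    rw [Real.exp_lt_one_iff]; norm_num
  have h3 := (h1.mul h2).div (tendsto_const_nhds (x := (1 : ℝ)) |>.sub h0)
    (sub_pos.2 he).ne'
  have hl : Real.exp (-1) * (1 + 0) / (1 - Real.exp (-1)) = 1 / (Real.exp 1 - 1) := by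
    have hp := Real.exp_pos 1
    have h4 : (1 : ℝ) < Real.exp 1 := by rw [Real.one_lt_exp_iff]; norm_num
    have h5 : Real.exp 1 - 1 ≠ 0 := (sub_pos.2 h4).ne'
    have h6 : (1 : ℝ) - Real.exp (-1) ≠ 0 := (sub_pos.2 he).ne'
    have h7 : Real.exp (-1) * Real.exp 1 = 1 := by rw [← Real.exp_add]; simp
    rw [div_eq_div_iff h6 h5]
    linear_combination h7
  rw [hl] at h3
  refine h3.congr' ?_
  filter_upwards [Filter.eventually_ge_atTop 1] with n hn
  have hn' : (n : ℝ) ≠ 0 := by positivity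
  have hn1 : (n : ℝ) + 1 ≠ 0 := by positivity
  have hf : (n.factorial : ℝ) ≠ 0 := by positivity
  rw [d_eq_num, d_eq_num]
  simp only [Pi.div_apply]
  have e1 : (1 : ℝ) - (numDerangements n : ℝ) / n.factorial
      = ((n.factorial : ℝ) - numDerangements n) / n.factorial := by field_simp
  have e2 : (numDerangements (n + 1) : ℝ) / ((n + 1).factorial : ℝ) * (1 + 1 / n)
      = numDerangements (n + 1) / n / n.factorial := by
    rw [Nat.factorial_succ]; push_cast; field_simp
  rw [e1, e2, div_div_div_cancel_right₀ hf, div_div]
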